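/- Let K be a non-Archimedean field, V a K-vector space of finite dimension d, and N, N', N'' three non-Archimedean norms on V. Then the relative volume satisfies the cocycle property vol(N,N') = vol(N,N'') + vol(N'',N'). -/

import Mathlib

open scoped BigOperators

/-- A non-Archimedean norm on a `K`-vector space `V`. -/
def IsNAnorm (K : Type*) {V : Type*} [NormedField K] [AddCommGroup V] [Module K V]
    (N : V → ℝ) : Prop :=
  (∀ v, 0 ≤ N v) ∧ (∀ v, N v = 0 ↔ v = 0) ∧
  (∀ (a : K) (v : V), N (a • v) = ‖a‖ * N v) ∧
  (∀ v w : V, N (v + w) ≤ max (N v) (N w))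

/-- The sup-distance `d_∞` between two norms on `V`. -/
noncomputable def dInfty {V : Type*} [AddCommGroup V] (N N' : V → ℝ) : ℝ :=
  sSup {r | ∃ v : V, v ≠ 0 ∧ r = |Real.log (N' v) - Real.log (N v)|}

/-- The `i`-th relative spectral value `λᵢ(N, N')`:
the supremum, over subspaces `W ⊆ V` with `dim W ≥ i`, of
`inf_{w ∈ W ∖ {0}} (log N'(w) − log N(w))`. -/
noncomputable def specVal (K : Type*) {V : Type*} [Field K] [AddCommGroup V] [Module K V]
    (N N' : V → ℝ) (i : ℕ) : ℝ :=
  sSup {r | ∃ W : Submodule K V, i ≤ Module.finrank K W ∧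
    r = sInf {s | ∃ w ∈ W, w ≠ (0 : V) ∧ s = Real.log (N' w) - Real.log (N w)}}

/-- The relative volume `vol(N, N') = (1/d)·Σ_{i=1}^d λᵢ(N, N')`, where `d = dim V`. -/
noncomputable def relVol (K : Type*) (V : Type*) [Field K] [AddCommGroup V] [Module K V]
    (N N' : V → ℝ) : ℝ :=
  (Module.finrank K V : ℝ)⁻¹ *
    ∑ i ∈ Finset.range (Module.finrank K V), specVal K N N' (i + 1)

/-!
A norm `N` on `V` induces a norm on the top exterior power of `V`, and the sum of the spectral
values `λᵢ(N, N')` is the logarithm of the ratio of the norms so induced by `N'` and `N`. The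
relative volume is thus a difference of a function of `N'` and the same function of `N`, which gives
the cocycle property.

Since `K` need not be spherically complete, `N` and `N'` need not have a common orthogonal basis,
but for every `C > 1` they have a common basis `b` that is orthogonal up to the factor `C`. By the
minimax principle the sorted values `log N'(bᵢ) - log N(bᵢ)` are the `λᵢ(N, N')` up to `log C`, and
by Hadamard's inequality `∏ N(bᵢ)` is the norm of `b₁ ∧ ⋯ ∧ b_d` up to the factor `C ^ d`. Finally
let `C` tend to `1`.
-/

section NormedSpace

open Module

variable {K V : Type*} [NormedField K] [NormedAddCommGroup V] [NormedSpace K V]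

theorem completeSpace_of_continuous_equivFun [CompleteSpace K] {ι : Type*} [Finite ι]
    (b : Basis ι K V) (hb : Continuous b.equivFun) : CompleteSpace V :=
  (completeSpace_congr (e := b.equivFun.symm.toEquiv) (b.equivFun.symm.isUniformEmbedding
    b.equivFun.symm.toLinearMap.continuous_on_pi hb)).1 inferInstance

theorem exists_norm_apply_le_of_isClosed_ker (f : Dual K V)
    (hf : IsClosed (LinearMap.ker f : Set V)) : ∃ C : ℝ, ∀ v, ‖f v‖ ≤ C * ‖v‖ := by
  by_cases hf0 : f = 0
  · exact ⟨0, fun v => by simp [hf0]⟩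
  obtain ⟨u, hu⟩ : ∃ u, f u ≠ 0 := by simpa [LinearMap.ext_iff] using hf0
  set δ := Metric.infDist u (LinearMap.ker f : Set V)
  have hδ : 0 < δ := (hf.notMem_iff_infDist_pos ⟨0, zero_mem _⟩).1 hu
  refine ⟨‖f u‖ / δ, fun v => ?_⟩
  rcases eq_or_ne (f v) 0 with hv | hv
  · rw [hv, norm_zero]
    positivity
  have hmem : u - (f u / f v) • v ∈ LinearMap.ker f := by simp [hv]
  have hdist : δ ≤ ‖f u‖ / ‖f v‖ * ‖v‖ := by
    simpa [dist_eq_norm, norm_smul] using Metric.infDist_le_dist_of_mem (x := u) hmem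
  rw [div_mul_eq_mul_div, le_div_iff₀ (norm_pos_iff.2 hv)] at hdist
  rw [div_mul_eq_mul_div, le_div_iff₀ hδ]
  linarith

/- `LinearMap.continuous_of_finiteDimensional` assumes a nontrivial absolute value, whereas here
`K` may be trivially valued. -/
theorem exists_norm_apply_le_of_finiteDimensional [CompleteSpace K] [FiniteDimensional K V]
    (f : Dual K V) : ∃ C : ℝ, ∀ v, ‖f v‖ ≤ C * ‖v‖ := by
  induction hn : finrank K V using Nat.strong_induction_on generalizing V with
  | _ n ih =>
  by_cases hf : f = 0
  · exact ⟨0, fun v => by simp [hf]⟩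
  have hlt : finrank K (LinearMap.ker f) < n := by
    have := Dual.finrank_ker_add_one_of_ne_zero hf
    omega
  let b := finBasis K (LinearMap.ker f)
  have hb : Continuous b.equivFun := continuous_pi fun i => by
    obtain ⟨C, hC⟩ := ih _ hlt (b.coord i) rfl
    exact ((b.coord i).mkContinuous C hC).continuous
  have := completeSpace_of_continuous_equivFun b hb
  exact exists_norm_apply_le_of_isClosed_ker f
    (completeSpace_coe_iff_isComplete.1 this).isClosed

end NormedSpace

section Real

theorem exists_one_lt_mul_self_eq {C : ℝ} (hC : 1 < C) : ∃ D : ℝ, 1 < D ∧ D * D = C :=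
  ⟨√C, Real.lt_sqrt_of_sq_lt (by simpa using hC), Real.mul_self_sqrt (by linarith)⟩

theorem exists_almost_max_ratio {α : Type*} {p q : α → ℝ} {R C : ℝ} (hq : ∀ x, 0 ≤ q x)
    (hpq : ∀ x, p x ≤ R * q x) {a : α} (ha : 0 < p a) (hC : 1 < C) :
    ∃ x, 0 < p x ∧ ∀ y, p y * q x ≤ C * (p x * q y) := by
  have pos_of_pos {x : α} (hx : 0 < p x) : 0 < q x :=
    (hq x).lt_of_ne' fun h => by linarith [hpq x, mul_eq_zero_of_right R h]
  let S : Set ℝ := {r | ∃ x, 0 < p x ∧ r = p x / q x}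
  have hS : S.Nonempty := ⟨_, a, ha, rfl⟩
  have hbdd : BddAbove S := by
    refine ⟨R, ?_⟩
    rintro _ ⟨x, hx, rfl⟩
    exact (div_le_iff₀ (pos_of_pos hx)).2 (hpq x)
  have hsup : 0 < sSup S := (div_pos ha (pos_of_pos ha)).trans_le (le_csSup hbdd ⟨a, ha, rfl⟩)
  obtain ⟨_, ⟨x, hx, rfl⟩, hlt⟩ := exists_lt_of_lt_csSup hS (div_lt_self hsup hC)
  rw [div_lt_div_iff₀ (by linarith) (pos_of_pos hx)] at hlt
  refine ⟨x, hx, fun y => ?_⟩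
  have hy : p y ≤ sSup S * q y := by
    rcases le_or_gt (p y) 0 with hy | hy
    · exact hy.trans (mul_nonneg hsup.le (hq y))
    · exact (div_le_iff₀ (pos_of_pos hy)).1 (le_csSup hbdd ⟨y, hy, rfl⟩)
  calc p y * q x ≤ sSup S * q y * q x := mul_le_mul_of_nonneg_right hy (hq x)
    _ = sSup S * q x * q y := by ring
    _ ≤ p x * C * q y := mul_le_mul_of_nonneg_right hlt.le (hq y)
    _ = C * (p x * q y) := by ring

end Real

namespace IsNAnorm

open Module

variable {K V : Type*} [NormedField K] [AddCommGroup V] [Module K V] {N N' : V → ℝ}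

theorem nonneg (hN : IsNAnorm K N) (v : V) : 0 ≤ N v := hN.1 v

theorem map_zero (hN : IsNAnorm K N) : N 0 = 0 := (hN.2.1 0).2 rfl

theorem pos (hN : IsNAnorm K N) {v : V} (hv : v ≠ 0) : 0 < N v :=
  (hN.nonneg v).lt_of_ne' (mt (hN.2.1 v).1 hv)

theorem map_smul (hN : IsNAnorm K N) (a : K) (v : V) : N (a • v) = ‖a‖ * N v := hN.2.2.1 a v

theorem isNonarchimedean (hN : IsNAnorm K N) : IsNonarchimedean N := hN.2.2.2

theorem add_le (hN : IsNAnorm K N) (v w : V) : N (v + w) ≤ N v + N w :=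
  hN.isNonarchimedean.add_le hN.nonneg

theorem map_neg (hN : IsNAnorm K N) (v : V) : N (-v) = N v := by
  simpa using hN.map_smul (-1) v

theorem sub_le_max (hN : IsNAnorm K N) (v w : V) : N (v - w) ≤ max (N v) (N w) := by
  simpa only [sub_eq_add_neg, hN.map_neg] using hN.isNonarchimedean v (-w)

theorem comp_subtype (hN : IsNAnorm K N) (W : Submodule K V) :
    IsNAnorm K (fun w : W => N w) :=
  ⟨fun w => hN.nonneg w, fun w => by simp [hN.2.1], fun a w => hN.map_smul a w,
    fun v w => hN.isNonarchimedean v w⟩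

theorem normedSpaceCore (hN : IsNAnorm K N) :
    letI : Norm V := ⟨N⟩
    NormedSpace.Core K V :=
  letI : Norm V := ⟨N⟩
  { norm_nonneg := hN.nonneg
    norm_smul := hN.map_smul
    norm_triangle := hN.add_le
    norm_eq_zero_iff := hN.2.1 }

theorem exists_norm_apply_le [CompleteSpace K] [FiniteDimensional K V] (hN : IsNAnorm K N)
    (f : Dual K V) : ∃ C : ℝ, ∀ v, ‖f v‖ ≤ C * N v :=
  letI : Norm V := ⟨N⟩
  letI := NormedAddCommGroup.ofCore hN.normedSpaceCore
  letI := NormedSpace.ofCore hN.normedSpaceCore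
  exists_norm_apply_le_of_finiteDimensional f

theorem exists_le_mul [CompleteSpace K] [FiniteDimensional K V] (hN : IsNAnorm K N)
    (hN' : IsNAnorm K N') : ∃ R : ℝ, ∀ v, N' v ≤ R * N v := by
  let b := finBasis K V
  choose C hC using fun i => hN.exists_norm_apply_le (b.coord i)
  refine ⟨∑ i, C i * N' (b i), fun v => ?_⟩
  calc N' v = N' (∑ i, b.coord i v • b i) := by simp only [Basis.coord_apply, b.sum_repr]
    _ ≤ ∑ i, N' (b.coord i v • b i) :=
        Finset.le_sum_of_subadditive N' hN'.map_zero.le hN'.add_le _ _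
    _ ≤ ∑ i, C i * N v * N' (b i) := Finset.sum_le_sum fun i _ => by
        rw [hN'.map_smul]
        exact mul_le_mul_of_nonneg_right (hC i v) (hN'.nonneg _)
    _ = (∑ i, C i * N' (b i)) * N v := by
        rw [Finset.sum_mul]
        exact Finset.sum_congr rfl fun i _ => by ring

theorem exists_le_norm_repr_mul (hN : IsNAnorm K N) {ι : Type*} [Finite ι] (b : Basis ι K V)
    {v : V} (hv : v ≠ 0) : ∃ i, b.repr v i ≠ 0 ∧ N v ≤ ‖b.repr v i‖ * N (b i) := by
  cases nonempty_fintype ι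
  have : Nontrivial V := ⟨v, 0, hv⟩
  have : Nonempty ι := b.index_nonempty
  obtain ⟨i, -, hi⟩ := hN.isNonarchimedean.finset_image_add_of_nonempty
    (fun i => b.repr v i • b i) Finset.univ_nonempty
  rw [b.sum_repr, hN.map_smul] at hi
  refine ⟨i, fun h => ?_, hi⟩
  rw [h, norm_zero, zero_mul] at hi
  exact hi.not_gt (hN.pos hv)

end IsNAnorm

section AlmostOrthogonal

open Module

variable {K V : Type*} [NormedField K] [AddCommGroup V] [Module K V]

/-- The functional `f` attains its operator norm with respect to `N` at the vector `v`, up to the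
factor `C`. The bound `‖f w‖ / N w ≤ C * (‖f v‖ / N v)` is stated with cleared denominators, so that
`w = 0` needs no exception. -/
structure IsAlmostNorming (N : V → ℝ) (C : ℝ) (f : Dual K V) (v : V) : Prop where
  apply_ne_zero : f v ≠ 0
  norm_apply_mul_le (w : V) : ‖f w‖ * N v ≤ C * (‖f v‖ * N w)

variable (K) in
/-- The family `b` is orthogonal with respect to the non-Archimedean norm `N` up to the factor
`C`: no term of a linear combination exceeds the combination by more than that factor. Exact
orthogonality is the case `C = 1`. -/
def IsAlmostOrthogonal {ι : Type*} [Fintype ι] (N : V → ℝ) (C : ℝ) (b : ι → V) : Prop :=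
  ∀ (c : ι → K) (i : ι), ‖c i‖ * N (b i) ≤ C * N (∑ j, c j • b j)

variable {N N' : V → ℝ} {C D : ℝ}

namespace IsAlmostNorming

variable {f : Dual K V} {v h : V}

theorem norm_mul_le (hf : IsAlmostNorming N C f v) (hh : f h = 0) (c : K) :
    ‖c‖ * N v ≤ C * N (c • v + h) := by
  have hle := hf.norm_apply_mul_le (c • v + h)
  rw [map_add, map_smul, hh, add_zero, smul_eq_mul, norm_mul] at hle
  refine le_of_mul_le_mul_left ?_ (norm_pos_iff.2 hf.apply_ne_zero)
  linarith

theorem le_mul_add (hN : IsNAnorm K N) (hC : 1 ≤ C) (hf : IsAlmostNorming N C f v)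
    (hh : f h = 0) (c : K) : N h ≤ C * N (c • v + h) := by
  have hmax := hN.sub_le_max (c • v + h) (c • v)
  rw [add_sub_cancel_left, hN.map_smul] at hmax
  exact hmax.trans (max_le (le_mul_of_one_le_left (hN.nonneg _) hC) (hf.norm_mul_le hh c))

theorem isAlmostOrthogonal_cons (hN : IsNAnorm K N) (hC : 1 ≤ C) (hD : 1 ≤ D)
    (hf : IsAlmostNorming N C f v) {n : ℕ} {b : Fin n → V} (hb : ∀ i, f (b i) = 0)
    (hbD : IsAlmostOrthogonal K N D b) :
    IsAlmostOrthogonal K N (D * C) (Fin.cons v b : Fin (n + 1) → V) := by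
  intro c i
  set h := ∑ j : Fin n, c j.succ • b j
  have hh : f h = 0 := by simp [h, hb]
  have hsum : ∑ j, c j • (Fin.cons v b : Fin (n + 1) → V) j = c 0 • v + h := by
    simp [Fin.sum_univ_succ, h]
  rw [hsum, mul_assoc]
  cases i using Fin.cases with
  | zero =>
    exact (hf.norm_mul_le hh (c 0)).trans
      (le_mul_of_one_le_left (mul_nonneg (by linarith) (hN.nonneg _)) hD)
  | succ i =>
    calc ‖c i.succ‖ * N (b i) ≤ D * N h := hbD (fun j => c j.succ) i
      _ ≤ D * (C * N (c 0 • v + h)) :=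
        mul_le_mul_of_nonneg_left (hf.le_mul_add hN hC hh (c 0)) (by linarith)

end IsAlmostNorming

theorem isAlmostOrthogonal_coe_iff {ι : Type*} [Fintype ι] {W : Submodule K V} {b : ι → W} :
    IsAlmostOrthogonal K (fun w : W => N w) C b ↔
      IsAlmostOrthogonal K N C fun i => (b i : V) := by
  simp [IsAlmostOrthogonal]

/- The basis depends only on `f`, `v` and `b`, so it serves several norms at once. -/
theorem exists_basis_forall_isAlmostOrthogonal {f : Dual K V} {v : V} (hv : f v ≠ 0) {n : ℕ}
    (b : Basis (Fin n) K (LinearMap.ker f)) :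
    ∃ B : Basis (Fin (n + 1)) K V, ∀ {N : V → ℝ} {C D : ℝ}, IsNAnorm K N → 1 ≤ C → 1 ≤ D →
      IsAlmostNorming N C f v → IsAlmostOrthogonal K (fun w : LinearMap.ker f => N w) D b →
      IsAlmostOrthogonal K N (D * C) B := by
  refine ⟨Basis.mkFinCons v b
    (fun c x hx h => by simpa [hv, LinearMap.mem_ker.1 hx] using congrArg f h)
    (fun z => ⟨-(f z / f v), by simp [hv]⟩), fun hN hC hD hf hb => ?_⟩
  rw [Basis.coe_mkFinCons]
  exact hf.isAlmostOrthogonal_cons hN hC hD (fun i => (b i).2) (isAlmostOrthogonal_coe_iff.1 hb)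

theorem exists_isAlmostNorming_vector [CompleteSpace K] [FiniteDimensional K V]
    (hN : IsNAnorm K N) (hC : 1 < C) {f : Dual K V} (hf : f ≠ 0) :
    ∃ v, IsAlmostNorming N C f v := by
  obtain ⟨u, hu⟩ : ∃ u, f u ≠ 0 := by simpa [LinearMap.ext_iff] using hf
  obtain ⟨R, hR⟩ := hN.exists_norm_apply_le f
  obtain ⟨v, hv, hmax⟩ := exists_almost_max_ratio hN.nonneg hR (norm_pos_iff.2 hu) hC
  exact ⟨v, norm_pos_iff.1 hv, hmax⟩

theorem exists_basis_isAlmostOrthogonal [CompleteSpace K] [FiniteDimensional K V]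
    (hN : IsNAnorm K N) (hC : 1 < C) {n : ℕ} (hn : finrank K V = n) :
    ∃ b : Basis (Fin n) K V, IsAlmostOrthogonal K N C b := by
  induction n generalizing V C with
  | zero => exact ⟨finBasisOfFinrankEq K V hn, fun _ i => i.elim0⟩
  | succ n ih =>
    obtain ⟨D, hD, rfl⟩ := exists_one_lt_mul_self_eq hC
    have : Nontrivial V := nontrivial_of_finrank_pos (R := K) (by omega)
    obtain ⟨f, hf⟩ := exists_ne (0 : Dual K V)
    obtain ⟨v, hv⟩ := exists_isAlmostNorming_vector hN hD hf
    obtain ⟨b, hb⟩ := ih (hN.comp_subtype (LinearMap.ker f)) hD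
      (by have := Dual.finrank_ker_add_one_of_ne_zero hf; omega)
    obtain ⟨B, hB⟩ := exists_basis_forall_isAlmostOrthogonal hv.apply_ne_zero b
    exact ⟨B, hB hN hD.le hD.le hv hb⟩

theorem IsAlmostOrthogonal.norm_repr_mul_le {ι : Type*} [Fintype ι] {b : Basis ι K V}
    (hb : IsAlmostOrthogonal K N C b) (v : V) (i : ι) : ‖b.repr v i‖ * N (b i) ≤ C * N v := by
  simpa only [b.sum_repr] using hb (b.repr v) i

theorem exists_isAlmostNorming_dual [CompleteSpace K] [FiniteDimensional K V]
    (hN : IsNAnorm K N) (hC : 1 < C) {v : V} (hv : v ≠ 0) :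
    ∃ f : Dual K V, IsAlmostNorming N C f v := by
  obtain ⟨b, hb⟩ := exists_basis_isAlmostOrthogonal hN hC rfl
  obtain ⟨i, hi, hvi⟩ := hN.exists_le_norm_repr_mul b hv
  refine ⟨b.coord i, hi, fun w => ?_⟩
  simp only [Basis.coord_apply]
  calc ‖b.repr w i‖ * N v ≤ ‖b.repr w i‖ * (‖b.repr v i‖ * N (b i)) :=
        mul_le_mul_of_nonneg_left hvi (norm_nonneg _)
    _ = ‖b.repr v i‖ * (‖b.repr w i‖ * N (b i)) := by ring
    _ ≤ ‖b.repr v i‖ * (C * N w) :=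
        mul_le_mul_of_nonneg_left (hb.norm_repr_mul_le w i) (norm_nonneg _)
    _ = C * (‖b.repr v i‖ * N w) := by ring

-- A vector almost maximising `N' / N` has, for both norms, the same almost norming functional.
theorem exists_isAlmostNorming_pair [CompleteSpace K] [FiniteDimensional K V] [Nontrivial V]
    (hN : IsNAnorm K N) (hN' : IsNAnorm K N') (hC : 1 < C) :
    ∃ (f : Dual K V) (v : V), IsAlmostNorming N C f v ∧ IsAlmostNorming N' C f v := by
  obtain ⟨D, hD, rfl⟩ := exists_one_lt_mul_self_eq hC
  obtain ⟨u, hu⟩ := exists_ne (0 : V)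
  obtain ⟨R, hR⟩ := hN.exists_le_mul hN'
  obtain ⟨v, hv, hmax⟩ := exists_almost_max_ratio hN.nonneg hR (hN'.pos hu) hD
  obtain ⟨f, hf⟩ := exists_isAlmostNorming_dual hN' hD (v := v)
    (fun h => hv.ne' (h ▸ hN'.map_zero))
  refine ⟨f, v, ⟨hf.apply_ne_zero, fun w => le_of_mul_le_mul_left ?_ hv⟩,
    ⟨hf.apply_ne_zero, fun w => (hf.norm_apply_mul_le w).trans ?_⟩⟩
  · calc N' v * (‖f w‖ * N v) = (‖f w‖ * N' v) * N v := by ring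
      _ ≤ D * (‖f v‖ * N' w) * N v :=
        mul_le_mul_of_nonneg_right (hf.norm_apply_mul_le w) (hN.nonneg v)
      _ = D * ‖f v‖ * (N' w * N v) := by ring
      _ ≤ D * ‖f v‖ * (D * (N' v * N w)) := mul_le_mul_of_nonneg_left (hmax w) (by positivity)
      _ = N' v * (D * D * (‖f v‖ * N w)) := by ring
  · exact mul_le_mul_of_nonneg_right (by nlinarith)
      (mul_nonneg (norm_nonneg _) (hN'.nonneg _))

theorem exists_basis_isAlmostOrthogonal_pair [CompleteSpace K] [FiniteDimensional K V]
    (hN : IsNAnorm K N) (hN' : IsNAnorm K N') (hC : 1 < C) {n : ℕ} (hn : finrank K V = n) :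
    ∃ b : Basis (Fin n) K V, IsAlmostOrthogonal K N C b ∧ IsAlmostOrthogonal K N' C b := by
  induction n generalizing V C with
  | zero => exact ⟨finBasisOfFinrankEq K V hn, fun _ i => i.elim0, fun _ i => i.elim0⟩
  | succ n ih =>
    obtain ⟨D, hD, rfl⟩ := exists_one_lt_mul_self_eq hC
    have : Nontrivial V := nontrivial_of_finrank_pos (R := K) (by omega)
    obtain ⟨f, v, hv, hv'⟩ := exists_isAlmostNorming_pair hN hN' hD
    have hf : f ≠ 0 := fun h => hv.apply_ne_zero (by simp [h])
    obtain ⟨b, hb, hb'⟩ := ih (hN.comp_subtype (LinearMap.ker f))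
      (hN'.comp_subtype (LinearMap.ker f)) hD
      (by have := Dual.finrank_ker_add_one_of_ne_zero hf; omega)
    obtain ⟨B, hB⟩ := exists_basis_forall_isAlmostOrthogonal hv.apply_ne_zero b
    exact ⟨B, hB hN hD.le hD.le hv hb, hB hN' hD.le hD.le hv' hb'⟩

end AlmostOrthogonal

section SpectralValue

open Module Real

variable {K V : Type*} [Field K] [AddCommGroup V] [Module K V] {N N' : V → ℝ}
  {R t : ℝ} {i : ℕ}

theorem sInf_log_sub_log_le (hR : ∀ v ≠ 0, |log (N' v) - log (N v)| ≤ R) {W : Submodule K V}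
    {w : V} (hw : w ∈ W) (hw0 : w ≠ 0) :
    sInf {s | ∃ w ∈ W, w ≠ (0 : V) ∧ s = log (N' w) - log (N w)} ≤ log (N' w) - log (N w) := by
  refine csInf_le ⟨-R, ?_⟩ ⟨w, hw, hw0, rfl⟩
  rintro _ ⟨v, -, hv, rfl⟩
  exact (abs_le.1 (hR v hv)).1

theorem specVal_le (hR : ∀ v ≠ 0, |log (N' v) - log (N v)| ≤ R) (hi : i ≤ finrank K V)
    (ht : ∀ W : Submodule K V, i ≤ finrank K W →
      ∃ w ∈ W, w ≠ 0 ∧ log (N' w) - log (N w) ≤ t) :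
    specVal K N N' i ≤ t := by
  refine csSup_le ⟨_, ⊤, by rwa [finrank_top], rfl⟩ ?_
  rintro _ ⟨W, hW, rfl⟩
  obtain ⟨w, hw, hw0, hwt⟩ := ht W hW
  exact (sInf_log_sub_log_le hR hw hw0).trans hwt

theorem le_specVal [FiniteDimensional K V] (hR : ∀ v ≠ 0, |log (N' v) - log (N v)| ≤ R)
    (hi : 0 < i) {W : Submodule K V} (hW : i ≤ finrank K W)
    (ht : ∀ w ∈ W, w ≠ 0 → t ≤ log (N' w) - log (N w)) :
    t ≤ specVal K N N' i := by
  have exists_ne_zero {W : Submodule K V} (hW : i ≤ finrank K W) : ∃ w ∈ W, w ≠ 0 :=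
    W.exists_mem_ne_zero_of_ne_bot (Submodule.one_le_finrank_iff.1 (hi.trans_le hW))
  have hbdd : BddAbove {r | ∃ W : Submodule K V, i ≤ finrank K W ∧
      r = sInf {s | ∃ w ∈ W, w ≠ (0 : V) ∧ s = log (N' w) - log (N w)}} := by
    refine ⟨R, ?_⟩
    rintro _ ⟨W, hW, rfl⟩
    obtain ⟨w, hw, hw0⟩ := exists_ne_zero hW
    exact (sInf_log_sub_log_le hR hw hw0).trans (abs_le.1 (hR w hw0)).2
  obtain ⟨w, hw, hw0⟩ := exists_ne_zero hW
  refine le_trans ?_ (le_csSup hbdd ⟨W, hW, rfl⟩)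
  refine le_csInf ⟨_, w, hw, hw0, rfl⟩ ?_
  rintro _ ⟨v, hv, hv0, rfl⟩
  exact ht v hv hv0

end SpectralValue

section AlmostOrthogonalBasis

open Module Real

variable {K V : Type*} [NormedField K] [AddCommGroup V] [Module K V] {N N' : V → ℝ} {C t : ℝ}

theorem finrank_span_basis_image {ι : Type*} (b : Basis ι K V) (s : Finset ι) :
    finrank K (Submodule.span K (b '' s)) = s.card := by
  classical
  rw [← Finset.coe_image, finrank_span_finset_eq_card,
    Finset.card_image_of_injective _ b.injective]
  simpa using (b.linearIndependent.linearIndepOn (s := s)).id_image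

namespace IsAlmostOrthogonal

variable {ι : Type*} [Fintype ι] {b : Basis ι K V}

theorem comp_equiv {ι' : Type*} [Fintype ι'] {b : ι → V} (hb : IsAlmostOrthogonal K N C b)
    (e : ι' ≃ ι) : IsAlmostOrthogonal K N C (b ∘ e) := by
  intro c i
  simpa [← e.sum_comp] using hb (c ∘ e.symm) (e i)

theorem sub_log_le_log_sub_log (hN : IsNAnorm K N) (hN' : IsNAnorm K N') (hC : 0 < C)
    (hb : IsAlmostOrthogonal K N' C b) {v : V} (hv : v ≠ 0)
    (ht : ∀ i, b.repr v i ≠ 0 → t ≤ log (N' (b i)) - log (N (b i))) :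
    t - log C ≤ log (N' v) - log (N v) := by
  obtain ⟨i, hi, hvi⟩ := hN.exists_le_norm_repr_mul b hv
  have hi' : ‖b.repr v i‖ ≠ 0 := norm_ne_zero_iff.2 hi
  have hbi := hN.pos (b.ne_zero i)
  have hbi' := hN'.pos (b.ne_zero i)
  have hupper : log (N v) ≤ log ‖b.repr v i‖ + log (N (b i)) := by
    rw [← log_mul hi' hbi.ne']
    exact log_le_log (hN.pos hv) hvi
  have hlower : log ‖b.repr v i‖ + log (N' (b i)) ≤ log C + log (N' v) := by
    rw [← log_mul hi' hbi'.ne', ← log_mul hC.ne' (hN'.pos hv).ne']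
    exact log_le_log (by positivity) (hb.norm_repr_mul_le v i)
  linarith [ht i hi]

theorem log_sub_log_le_add_log (hN : IsNAnorm K N) (hN' : IsNAnorm K N') (hC : 0 < C)
    (hb : IsAlmostOrthogonal K N C b) {v : V} (hv : v ≠ 0)
    (ht : ∀ i, b.repr v i ≠ 0 → log (N' (b i)) - log (N (b i)) ≤ t) :
    log (N' v) - log (N v) ≤ t + log C := by
  have := hb.sub_log_le_log_sub_log (t := -t) hN' hN hC hv fun i hi => by linarith [ht i hi]
  linarith

theorem exists_abs_log_sub_log_le (hN : IsNAnorm K N) (hN' : IsNAnorm K N') (hC : 0 < C)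
    (hb : IsAlmostOrthogonal K N C b) (hb' : IsAlmostOrthogonal K N' C b) :
    ∃ R, ∀ v ≠ 0, |log (N' v) - log (N v)| ≤ R := by
  obtain ⟨M, hM⟩ := Finite.bddAbove_range fun i => |log (N' (b i)) - log (N (b i))|
  have hμ (i) : |log (N' (b i)) - log (N (b i))| ≤ M := hM ⟨i, rfl⟩
  refine ⟨M + log C, fun v hv => abs_le.2 ⟨?_, ?_⟩⟩
  · have := hb'.sub_log_le_log_sub_log hN hN' hC hv fun i _ => (abs_le.1 (hμ i)).1
    linarith
  · exact hb.log_sub_log_le_add_log hN hN' hC hv fun i _ => (abs_le.1 (hμ i)).2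

section Antitone

variable {n : ℕ} {b : Basis (Fin n) K V}

theorem specVal_le_add_log (hN : IsNAnorm K N) (hN' : IsNAnorm K N') (hC : 0 < C)
    (hb : IsAlmostOrthogonal K N C b) (hb' : IsAlmostOrthogonal K N' C b)
    (hanti : Antitone fun j => log (N' (b j)) - log (N (b j))) (i : Fin n) :
    specVal K N N' (i + 1) ≤ log (N' (b i)) - log (N (b i)) + log C := by
  have : FiniteDimensional K V := b.finiteDimensional_of_finite
  have hn : finrank K V = n := by simp [finrank_eq_card_basis b]
  obtain ⟨R, hR⟩ := hb.exists_abs_log_sub_log_le hN hN' hC hb'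
  refine specVal_le hR (by omega) fun W hW => ?_
  have hnd : ¬ Disjoint W (Submodule.span K (b '' (Finset.Ici i : Finset (Fin n)))) := by
    intro hdisj
    have := Submodule.finrank_add_finrank_le_of_disjoint hdisj
    rw [finrank_span_basis_image, Fin.card_Ici] at this
    omega
  rw [Submodule.disjoint_def] at hnd
  push Not at hnd
  obtain ⟨w, hwW, hw, hw0⟩ := hnd
  refine ⟨w, hwW, hw0, hb.log_sub_log_le_add_log hN hN' hC hw0 fun j hj => hanti ?_⟩
  simpa using b.mem_span_image.1 hw (Finsupp.mem_support_iff.2 hj)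

theorem sub_log_le_specVal (hN : IsNAnorm K N) (hN' : IsNAnorm K N') (hC : 0 < C)
    (hb : IsAlmostOrthogonal K N C b) (hb' : IsAlmostOrthogonal K N' C b)
    (hanti : Antitone fun j => log (N' (b j)) - log (N (b j))) (i : Fin n) :
    log (N' (b i)) - log (N (b i)) - log C ≤ specVal K N N' (i + 1) := by
  have : FiniteDimensional K V := b.finiteDimensional_of_finite
  obtain ⟨R, hR⟩ := hb.exists_abs_log_sub_log_le hN hN' hC hb'
  have hdim : finrank K (Submodule.span K (b '' (Finset.Iic i : Finset (Fin n)))) = i + 1 := by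
    rw [finrank_span_basis_image, Fin.card_Iic]
  refine le_specVal hR i.succ_pos hdim.ge fun w hw hw0 =>
    hb'.sub_log_le_log_sub_log hN hN' hC hw0 fun j hj => hanti ?_
  simpa using b.mem_span_image.1 hw (Finsupp.mem_support_iff.2 hj)

theorem abs_sum_specVal_sub_le_of_antitone (hN : IsNAnorm K N) (hN' : IsNAnorm K N')
    (hC : 0 < C) (hb : IsAlmostOrthogonal K N C b) (hb' : IsAlmostOrthogonal K N' C b)
    (hanti : Antitone fun j => log (N' (b j)) - log (N (b j))) :
    |∑ i ∈ Finset.range n, specVal K N N' (i + 1) - ∑ i, (log (N' (b i)) - log (N (b i)))| ≤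
      n * log C := by
  rw [Finset.sum_range, ← Finset.sum_sub_distrib]
  calc _ ≤ ∑ i : Fin n, |specVal K N N' (i + 1) - (log (N' (b i)) - log (N (b i)))| :=
        Finset.abs_sum_le_sum_abs _ _
    _ ≤ ∑ _ : Fin n, log C := Finset.sum_le_sum fun i _ => abs_sub_le_iff.2
        ⟨by linarith [hb.specVal_le_add_log hN hN' hC hb' hanti i],
          by linarith [hb.sub_log_le_specVal hN hN' hC hb' hanti i]⟩
    _ = n * log C := by simp

theorem abs_sum_specVal_sub_le (hN : IsNAnorm K N) (hN' : IsNAnorm K N')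
    (hC : 0 < C) (hb : IsAlmostOrthogonal K N C b) (hb' : IsAlmostOrthogonal K N' C b) :
    |∑ i ∈ Finset.range n, specVal K N N' (i + 1) - ∑ i, (log (N' (b i)) - log (N (b i)))| ≤
      n * log C := by
  let μ : Fin n → ℝ := fun j => log (N' (b j)) - log (N (b j))
  let σ : Equiv.Perm (Fin n) := Tuple.sort fun j => -μ j
  have hσ : Antitone (μ ∘ σ) := fun j k hjk => neg_le_neg_iff.1 (Tuple.monotone_sort (-μ ·) hjk)
  have hcoe : ⇑(b.reindex σ.symm) = b ∘ σ := by
    ext j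
    simp
  have hle := abs_sum_specVal_sub_le_of_antitone (b := b.reindex σ.symm) hN hN' hC
    (hcoe ▸ hb.comp_equiv σ) (hcoe ▸ hb'.comp_equiv σ) (by rw [hcoe]; exact hσ)
  rwa [hcoe, show ∑ i, (log (N' ((b ∘ σ) i)) - log (N ((b ∘ σ) i))) = ∑ i, μ i from
    Equiv.sum_comp σ μ] at hle

end Antitone

end IsAlmostOrthogonal

end AlmostOrthogonalBasis

section Determinant

open Module Real

theorem exists_norm_det_le_prod {R ι : Type*} [NormedCommRing R] [NormMulClass R] [NormOneClass R]
    [IsUltrametricDist R] [Fintype ι] [DecidableEq ι] (A : Matrix ι ι R) :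
    ∃ σ : Equiv.Perm ι, ‖A.det‖ ≤ ∏ i, ‖A (σ i) i‖ := by
  obtain ⟨σ, -, hσ⟩ := IsUltrametricDist.exists_norm_finsetSum_le_of_nonempty
    Finset.univ_nonempty fun σ : Equiv.Perm ι => Equiv.Perm.sign σ • ∏ i, A (σ i) i
  refine ⟨σ, (A.det_apply ▸ hσ).trans_eq ?_⟩
  rw [← norm_prod]
  rcases Int.units_eq_one_or (Equiv.Perm.sign σ) with h | h <;> simp [h]

variable {K V ι : Type*} [NormedField K] [AddCommGroup V] [Module K V] [Fintype ι]
  [DecidableEq ι] {N N' : V → ℝ} {C : ℝ}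

/-- The logarithm of the determinant norm of `N` at `e₁ ∧ ⋯ ∧ e_d`, that is, of the infimum of
`∏ N(bᵢ)` over the bases `b` with `b₁ ∧ ⋯ ∧ b_d = e₁ ∧ ⋯ ∧ e_d`. The exterior power is avoided by
letting `b` range over all bases and dividing by `|det_e b|`. -/
noncomputable def logDetNorm (e : Basis ι K V) (N : V → ℝ) : ℝ :=
  ⨅ b : Basis ι K V, (∑ i, log (N (b i)) - log ‖e.det b‖)

theorem log_norm_det_add_log_norm_det (e b b' : Basis ι K V) :
    log ‖e.det b‖ + log ‖b.det b'‖ = log ‖e.det b'‖ := by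
  rw [← Basis.det_mul_det e b b', norm_mul, log_mul (norm_ne_zero_iff.2 (e.isUnit_det b).ne_zero)
    (norm_ne_zero_iff.2 (b.isUnit_det b').ne_zero)]

namespace IsAlmostOrthogonal

variable [IsUltrametricDist K] {b : Basis ι K V}

theorem norm_det_mul_prod_le (hN : IsNAnorm K N) (hb : IsAlmostOrthogonal K N C b)
    (v : ι → V) : ‖b.det v‖ * ∏ i, N (b i) ≤ C ^ Fintype.card ι * ∏ i, N (v i) := by
  obtain ⟨σ, hσ⟩ := exists_norm_det_le_prod (b.toMatrix v)
  calc ‖b.det v‖ * ∏ i, N (b i)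
      ≤ (∏ i, ‖b.repr (v i) (σ i)‖) * ∏ i, N (b i) :=
        mul_le_mul_of_nonneg_right hσ (Finset.prod_nonneg fun i _ => hN.nonneg _)
    _ = ∏ i, ‖b.repr (v i) (σ i)‖ * N (b (σ i)) := by
        rw [Finset.prod_mul_distrib, Equiv.prod_comp σ fun i => N (b i)]
    _ ≤ ∏ i, C * N (v i) := Finset.prod_le_prod
        (fun i _ => mul_nonneg (norm_nonneg _) (hN.nonneg _)) fun i _ => hb.norm_repr_mul_le _ _
    _ = C ^ Fintype.card ι * ∏ i, N (v i) := by simp [Finset.prod_mul_distrib]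

theorem log_norm_det_add_sum_log_le (hN : IsNAnorm K N) (hC : 0 < C)
    (hb : IsAlmostOrthogonal K N C b) (b' : Basis ι K V) :
    log ‖b.det b'‖ + ∑ i, log (N (b i)) ≤ Fintype.card ι * log C + ∑ i, log (N (b' i)) := by
  have hdet : 0 < ‖b.det b'‖ := norm_pos_iff.2 (b.isUnit_det b').ne_zero
  have hpos (b : Basis ι K V) (i : ι) : 0 < N (b i) := hN.pos (b.ne_zero i)
  have hprod (b : Basis ι K V) : 0 < ∏ i, N (b i) := Finset.prod_pos fun i _ => hpos b i
  have hlog := log_le_log (mul_pos hdet (hprod b)) (hb.norm_det_mul_prod_le hN b')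
  rwa [log_mul hdet.ne' (hprod b).ne', log_mul (pow_pos hC _).ne' (hprod b').ne', log_pow,
    log_prod fun i _ => (hpos b i).ne', log_prod fun i _ => (hpos b' i).ne'] at hlog

theorem abs_sum_log_sub_log_norm_det_sub_logDetNorm_le (hN : IsNAnorm K N) (hC : 0 < C)
    (hb : IsAlmostOrthogonal K N C b) (e : Basis ι K V) :
    |∑ i, log (N (b i)) - log ‖e.det b‖ - logDetNorm e N| ≤ Fintype.card ι * log C := by
  have hmin (b' : Basis ι K V) :
      ∑ i, log (N (b i)) - log ‖e.det b‖ - Fintype.card ι * log C ≤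
        ∑ i, log (N (b' i)) - log ‖e.det b'‖ := by
    linarith [hb.log_norm_det_add_sum_log_le hN hC b', log_norm_det_add_log_norm_det e b b']
  have : Nonempty (Basis ι K V) := ⟨b⟩
  have hge : _ ≤ logDetNorm e N := le_ciInf hmin
  have hle : logDetNorm e N ≤ _ := ciInf_le ⟨_, Set.forall_mem_range.2 hmin⟩ b
  exact abs_sub_le_iff.2 ⟨by linarith, by linarith⟩

end IsAlmostOrthogonal

theorem sum_specVal_eq_logDetNorm_sub [IsUltrametricDist K] [CompleteSpace K]
    {n : ℕ} (e : Basis (Fin n) K V) (hN : IsNAnorm K N) (hN' : IsNAnorm K N') :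
    ∑ i ∈ Finset.range n, specVal K N N' (i + 1) = logDetNorm e N' - logDetNorm e N := by
  have : FiniteDimensional K V := e.finiteDimensional_of_finite
  have happrox {ε : ℝ} (hε : 0 < ε) :
      |∑ i ∈ Finset.range n, specVal K N N' (i + 1) - (logDetNorm e N' - logDetNorm e N)| ≤
        3 * n * ε := by
    obtain ⟨b, hb, hb'⟩ := exists_basis_isAlmostOrthogonal_pair hN hN' (one_lt_exp_iff.2 hε)
      (n := n) (by simp [finrank_eq_card_basis e])
    have hspec := hb.abs_sum_specVal_sub_le hN hN' (exp_pos ε) hb'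
    have hvol := hb.abs_sum_log_sub_log_norm_det_sub_logDetNorm_le hN (exp_pos ε) e
    have hvol' := hb'.abs_sum_log_sub_log_norm_det_sub_logDetNorm_le hN' (exp_pos ε) e
    rw [log_exp, Finset.sum_sub_distrib, abs_le] at hspec
    rw [log_exp, Fintype.card_fin, abs_le] at hvol hvol'
    exact abs_le.2 ⟨by linarith, by linarith⟩
  refine eq_of_abs_sub_le_all fun ε hε =>
    (happrox (ε := ε / (3 * n + 1)) (by positivity)).trans ?_
  rw [mul_div_assoc', div_le_iff₀ (by positivity)]
  linarith

end Determinant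

theorem relVol_eq_logDetNorm_sub {K V : Type*} [NormedField K] [IsUltrametricDist K]
    [CompleteSpace K] [AddCommGroup V] [Module K V] {N N' : V → ℝ} (hN : IsNAnorm K N)
    (hN' : IsNAnorm K N') (e : Module.Basis (Fin (Module.finrank K V)) K V) :
    relVol K V N N' = (Module.finrank K V : ℝ)⁻¹ * (logDetNorm e N' - logDetNorm e N) := by
  rw [relVol, sum_specVal_eq_logDetNorm_sub e hN hN']

/-- The cocycle property of the relative volume: `vol(N,N') = vol(N,N'') + vol(N'',N')`. -/
theorem relVol_cocycle
    (K V : Type*) [NormedField K] [IsUltrametricDist K] [CompleteSpace K]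
    [AddCommGroup V] [Module K V] [FiniteDimensional K V]
    (N N' N'' : V → ℝ)
    (hN : IsNAnorm K N) (hN' : IsNAnorm K N') (hN'' : IsNAnorm K N'') :
    relVol K V N N' = relVol K V N N'' + relVol K V N'' N' := by
  let e := Module.finBasis K V
  rw [relVol_eq_logDetNorm_sub hN hN' e, relVol_eq_logDetNorm_sub hN hN'' e,
    relVol_eq_logDetNorm_sub hN'' hN' e]
  ring
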